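/- Every finite-volume right-angled convex hyperbolic n-polyhedron (n ≥ 2) is simple at edges: each of its 1-dimensional faces is contained in exactly n − 1 facets. -/

import Mathlib

open scoped BigOperators

noncomputable section

/-- The Minkowski bilinear form `⟨x,y⟩ = -x₀y₀ + x₁y₁ + ⋯ + xₙyₙ` on `ℝ^{n+1}`. -/
def mink {n : ℕ} (x y : Fin (n + 1) → ℝ) : ℝ :=
  -(x 0 * y 0) + ∑ i : Fin n, x i.succ * y i.succ

/-- The hyperboloid model of the hyperbolic space `ℍⁿ`. -/
def Hyperboloid (n : ℕ) : Set (Fin (n + 1) → ℝ) :=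
  {x | mink x x = -1 ∧ 0 < x 0}

/-- The Klein projection `x ↦ (x₁/x₀, …, xₙ/x₀)` of the hyperboloid onto the unit ball. -/
def kleinMap {n : ℕ} (x : Fin (n + 1) → ℝ) : EuclideanSpace ℝ (Fin n) :=
  WithLp.toLp 2 fun i => x i.succ / x 0

/-- Dimension of a subset of a real vector space: the rank of its vector span. -/
def sdim {n : ℕ} (s : Set (EuclideanSpace ℝ (Fin n))) : ℕ :=
  Module.finrank ℝ (vectorSpan ℝ s)

/-- A convex hyperbolic `n`-polyhedron: a finite intersection of hyperbolic half-spaces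
`H_{eᵢ}⁻ = {x : ⟨eᵢ,x⟩ ≤ 0}` (with `⟨eᵢ,eᵢ⟩ = 1`) having nonempty interior
(equivalently, its Klein-model image has nonempty interior in `ℝⁿ`). -/
structure HypPolyhedron (n : ℕ) where
  m : ℕ
  e : Fin m → (Fin (n + 1) → ℝ)
  unit : ∀ i, mink (e i) (e i) = 1
  nonempty_int :
    (interior (kleinMap '' {x ∈ Hyperboloid n | ∀ i, mink (e i) x ≤ 0})).Nonempty

namespace HypPolyhedron

variable {n : ℕ} (P : HypPolyhedron n)

/-- The set of points of the polyhedron in the hyperboloid model. -/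
def carrier : Set (Fin (n + 1) → ℝ) :=
  {x ∈ Hyperboloid n | ∀ i, mink (P.e i) x ≤ 0}

/-- `P̄`: the closure of the Klein-model image of the polyhedron in the closed unit ball. -/
def cl : Set (EuclideanSpace ℝ (Fin n)) :=
  closure (kleinMap '' P.carrier)

/-- The `k`-faces of `P`: the `k`-dimensional (nonempty) exposed faces of `P̄`. -/
def faces (k : ℕ) : Set (Set (EuclideanSpace ℝ (Fin n))) :=
  {F | IsExposed ℝ P.cl F ∧ F.Nonempty ∧ sdim F = k}

/-- `a_k(P)`: the number of `k`-faces of `P`. -/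
def a (k : ℕ) : ℕ := (P.faces k).ncard

/-- Vertices of `P`: the points of `0`-dimensional exposed faces of `P̄`. -/
def verts : Set (EuclideanSpace ℝ (Fin n)) :=
  {v | IsExposed ℝ P.cl {v}}

/-- Ideal vertices: vertices lying on the unit sphere. -/
def idealVerts : Set (EuclideanSpace ℝ (Fin n)) :=
  {v ∈ P.verts | ‖v‖ = 1}

/-- Finite vertices: vertices lying in the open unit ball. -/
def finiteVerts : Set (EuclideanSpace ℝ (Fin n)) :=
  {v ∈ P.verts | ‖v‖ < 1}

/-- `v_∞(P)`: the number of ideal vertices of `P`. -/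
def vInf : ℕ := P.idealVerts.ncard

/-- The bounding hyperplane `H_e` contains the face `F`. -/
def faceInHyperplane (e : Fin (n + 1) → ℝ) (F : Set (EuclideanSpace ℝ (Fin n))) : Prop :=
  ∀ x ∈ P.carrier, kleinMap x ∈ F → mink e x = 0

/-- `P` is right-angled: whenever two distinct bounding hyperplanes both contain an
`(n-2)`-dimensional face of `P`, the corresponding unit normals are orthogonal,
i.e. the dihedral angle is `π/2`. -/
def IsRightAngled : Prop :=
  ∀ i j : Fin P.m, i ≠ j →
    (∃ F ∈ P.faces (n - 2), P.faceInHyperplane (P.e i) F ∧ P.faceInHyperplane (P.e j) F) →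
    mink (P.e i) (P.e j) = 0

/-- `P` has finite volume: `P̄` is the convex hull of its (finitely many) vertices. -/
def FiniteVolume : Prop :=
  P.verts.Finite ∧ P.cl = convexHull ℝ P.verts

/-- `P` is compact: finite volume and all vertices are finite. -/
def IsCompactPoly : Prop :=
  P.FiniteVolume ∧ ∀ v ∈ P.verts, ‖v‖ < 1

/-- `P` is ideal: finite volume and all vertices are ideal. -/
def IsIdeal : Prop :=
  P.FiniteVolume ∧ ∀ v ∈ P.verts, ‖v‖ = 1

end HypPolyhedron

/-- `ν(P) = a_{n-1}(P) + v_∞(P)` ranging over the family `𝒫ⁿ` of finite-volume non-compact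
right-angled convex hyperbolic `n`-polyhedra. -/
def nuSet (n : ℕ) : Set ℕ :=
  {m | ∃ P : HypPolyhedron n,
        P.FiniteVolume ∧ P.IsRightAngled ∧ ¬ P.IsCompactPoly ∧ P.a (n - 1) + P.vInf = m}

/-- `νₙ = sInf {ν(P) : P ∈ 𝒫ⁿ}` (with `sInf ∅ = 0`). -/
def nu (n : ℕ) : ℕ := sInf (nuSet n)

/-- A finite system of linear inequalities on a subspace, strictly solvable there, contains an
irredundant subsystem with the same solutions; each of its members can be made tight while all the
others stay strict. -/
theorem exists_irredundant_subsystem {ι V : Type*} [DecidableEq ι] [AddCommGroup V] [Module ℝ V]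
    (f : ι → Module.Dual ℝ V) (H : Submodule ℝ V) (S : Finset ι) {y : V} (hyH : y ∈ H)
    (hy : ∀ i ∈ S, f i y < 0) :
    ∃ T ⊆ S, (∀ v ∈ H, (∀ i ∈ T, f i v ≤ 0) → ∀ i ∈ S, f i v ≤ 0) ∧
      ∀ k ∈ T, ∃ z ∈ H, f k z = 0 ∧ ∀ i ∈ T, i ≠ k → f i z < 0 := by
  classical
  let A : Finset (Finset ι) := S.powerset.filter
    fun T => ∀ v ∈ H, (∀ i ∈ T, f i v ≤ 0) → ∀ i ∈ S, f i v ≤ 0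
  have hA : A.Nonempty := ⟨S, by simp only [A, Finset.mem_filter, Finset.mem_powerset]; tauto⟩
  obtain ⟨T, hTA, hmin⟩ := A.exists_min_image Finset.card hA
  simp only [A, Finset.mem_filter, Finset.mem_powerset] at hTA hmin
  obtain ⟨hTS, hT⟩ := hTA
  refine ⟨T, hTS, hT, fun k hk => ?_⟩
  have hfail : ¬ ∀ v ∈ H, (∀ i ∈ T.erase k, f i v ≤ 0) → ∀ i ∈ S, f i v ≤ 0 := fun h =>
    absurd (hmin (T.erase k) ⟨(T.erase_subset k).trans hTS, h⟩)
      (not_le.2 (Finset.card_erase_lt_of_mem hk))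
  push Not at hfail
  obtain ⟨v, hvH, hv, s, hs, hsv⟩ := hfail
  have hkv : 0 < f k v := by
    by_contra! hle
    refine absurd (hT v hvH (fun i hi => ?_) s hs) (not_le.2 hsv)
    by_cases hik : i = k
    · exact hik ▸ hle
    · exact hv i (Finset.mem_erase.2 ⟨hik, hi⟩)
  refine ⟨f k v • y - f k y • v, H.sub_mem (H.smul_mem _ hyH) (H.smul_mem _ hvH), ?_, ?_⟩
  · simp [mul_comm]
  · intro i hi hik
    have h₁ := hv i (Finset.mem_erase.2 ⟨hik, hi⟩)
    have h₂ := hy i (hTS hi)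
    have h₃ := hy k (hTS hk)
    simp only [map_sub, map_smul, smul_eq_mul]
    nlinarith [mul_pos hkv (neg_pos.2 h₂), mul_nonneg (neg_pos.2 h₃).le (neg_nonneg.2 h₁)]

/-- Functionals whose Gram matrix is positive definite with nonpositive off-diagonal entries and
that are simultaneously negative at some point are linearly independent. -/
theorem linearIndependent_of_gram_nonpos {ι V : Type*} [Fintype ι] [AddCommGroup V] [Module ℝ V]
    (f : ι → Module.Dual ℝ V) (w : ι → V) (x₀ : V) (hx₀ : ∀ i, f i x₀ < 0)
    (hobt : ∀ i j, i ≠ j → f i (w j) ≤ 0)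
    (hpos : ∀ c : ι → ℝ, ∑ i, ∑ j, c i * c j * f i (w j) ≤ 0 → ∑ i, c i • f i = 0) :
    LinearIndependent ℝ f := by
  rw [Fintype.linearIndependent_iff]
  -- a linear relation has no positive coefficients
  have key : ∀ c : ι → ℝ, (∀ v, ∑ i, c i * f i v = 0) → ∀ i, c i ≤ 0 := by
    intro c hrel
    have hsum : ∑ i, max (c i) 0 • f i = 0 := by
      apply hpos
      have hrow : ∑ i, ∑ j, max (c i) 0 * max (c j) 0 * f i (w j)
          = ∑ j, ∑ i, max (c j) 0 * ((max (c i) 0 - c i) * f i (w j)) := by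
        rw [Finset.sum_comm]
        refine Finset.sum_congr rfl fun j _ => ?_
        rw [← Finset.mul_sum]
        simp only [sub_mul, Finset.sum_sub_distrib, hrel, sub_zero, Finset.mul_sum]
        exact Finset.sum_congr rfl fun i _ => by ring
      rw [hrow]
      refine Finset.sum_nonpos fun j _ => Finset.sum_nonpos fun i _ => ?_
      by_cases hij : i = j
      · subst hij
        rcases le_total (c i) 0 with h | h <;> simp [h]
      · rw [← mul_assoc]
        exact mul_nonpos_of_nonneg_of_nonpos
          (mul_nonneg (le_max_right _ _) (sub_nonneg.2 (le_max_left _ _))) (hobt i j hij)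
    have heval : ∑ i, -(max (c i) 0 * f i x₀) = 0 := by
      have := LinearMap.congr_fun hsum x₀
      simpa using this
    rw [Finset.sum_eq_zero_iff_of_nonneg fun i _ => by
      nlinarith [le_max_right (c i) 0, hx₀ i]] at heval
    intro i
    have := heval i (Finset.mem_univ i)
    have hm : max (c i) 0 = 0 := by
      simpa [(hx₀ i).ne] using this
    exact hm ▸ le_max_left (c i) 0
  intro c hc i
  have hrel : ∀ v, ∑ i, c i * f i v = 0 := fun v => by simpa using LinearMap.congr_fun hc v
  refine le_antisymm (key c hrel i) ?_
  simpa using key (-c) (fun v => by simpa using hrel v) i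

/-- A polyhedral cone whose codimension-two faces are all right-angled is simplicial: an
irredundant subsystem of its defining functionals is linearly independent. -/
theorem exists_linearIndependent_of_rightAngled_cone {ι V : Type*} [Fintype ι] [AddCommGroup V]
    [Module ℝ V] (f : ι → Module.Dual ℝ V) (w : ι → V) (x₀ : V) (hx₀ : ∀ i, f i x₀ < 0)
    (hpos : ∀ c : ι → ℝ, ∑ i, ∑ j, c i * c j * f i (w j) ≤ 0 → ∑ i, c i • f i = 0)
    (hunit : ∀ i, f i (w i) = 1) (hsymm : ∀ i j, f i (w j) = f j (w i))
    (hright : ∀ j k, j ≠ k → (∃ y, f j y = 0 ∧ f k y < 0) →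
      (∃ z, f j z = 0 ∧ f k z = 0 ∧ (∀ i, f i z ≤ 0) ∧
        ∀ v, f j v = 0 → f k v = 0 → ∃ ε : ℝ, 0 < ε ∧ ∀ i, f i (z + ε • v) ≤ 0) →
      f j (w k) = 0) :
    ∃ J : Finset ι, (∀ v, (∀ i ∈ J, f i v ≤ 0) → ∀ i, f i v ≤ 0) ∧
      (∀ k ∈ J, ∃ z, f k z = 0 ∧ ∀ i ∈ J, i ≠ k → f i z < 0) ∧
      LinearIndependent ℝ fun j : J => f j := by
  classical
  obtain ⟨J, -, hJ, hfacet⟩ := exists_irredundant_subsystem f ⊤ Finset.univ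
    (Submodule.mem_top (x := x₀)) (fun i _ => hx₀ i)
  simp only [Submodule.mem_top, true_and, Finset.mem_univ, forall_true_left] at hJ hfacet
  refine ⟨J, hJ, hfacet, ?_⟩
  -- orthogonal projection to the hyperplane of a facet maps the cone into that facet
  have hproj : ∀ j ∈ J, ∀ x, (∀ i, f i x ≤ 0) → ∀ i, f i (x - f j x • w j) ≤ 0 := by
    intro j hj x hx
    obtain ⟨y, hyj, hy⟩ := hfacet j hj
    obtain ⟨T, hTJ, hT, hridge⟩ := exists_irredundant_subsystem f (LinearMap.ker (f j)) (J.erase j)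
      (LinearMap.mem_ker.2 hyj) (fun i hi => hy i (Finset.mem_of_mem_erase hi)
        (Finset.ne_of_mem_erase hi))
    have hcone : ∀ v, f j v = 0 → (∀ i ∈ T, f i v ≤ 0) → ∀ i, f i v ≤ 0 := by
      intro v hv hvT
      refine hJ v fun i hi => ?_
      by_cases hij : i = j
      · exact (hij ▸ hv).le
      · exact hT v hv hvT i (Finset.mem_erase.2 ⟨hij, hi⟩)
    have horth : ∀ k ∈ T, f j (w k) = 0 := by
      intro k hk
      have hkJ := hTJ hk
      obtain ⟨z, hzj, hzk, hz⟩ := hridge k hk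
      have hzj : f j z = 0 := hzj
      refine hright j k (Finset.ne_of_mem_erase hkJ).symm
        ⟨y, hyj, hy k (Finset.mem_of_mem_erase hkJ) (Finset.ne_of_mem_erase hkJ)⟩
        ⟨z, hzj, hzk, hcone z hzj fun i hi => ?_, fun v hvj hvk => ?_⟩
      · by_cases hik : i = k
        · exact (hik ▸ hzk).le
        · exact (hz i hi hik).le
      · have hev : ∀ᶠ t : ℝ in nhdsWithin 0 (Set.Ioi 0), ∀ i ∈ T, f i (z + t • v) ≤ 0 := by
          rw [Filter.eventually_all_finset]
          intro i hi
          by_cases hik : i = k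
          · subst hik
            simp [hzk, hvk]
          · have hlim : Filter.Tendsto (fun t : ℝ => f i z + t * f i v) (nhds 0)
                (nhds (f i z + 0 * f i v)) := Continuous.tendsto (by fun_prop) 0
            rw [zero_mul, add_zero] at hlim
            filter_upwards [nhdsWithin_le_nhds (hlim.eventually_lt_const (hz i hi hik))] with t ht
            simpa using ht.le
        obtain ⟨ε, hε, hpos⟩ := (hev.and self_mem_nhdsWithin).exists
        exact ⟨ε, hpos, hcone _ (by simp [hzj, hvj]) hε⟩
    refine hcone _ (by simp [hunit]) fun i hi => ?_
    simpa [hsymm i j, horth i hi] using hx i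
  refine linearIndependent_of_gram_nonpos _ (fun j : J => w j) x₀ (fun i => hx₀ i) ?_ ?_
  · intro k j hkj
    have hkj' : (j : ι) ≠ k := fun h => hkj (Subtype.ext h.symm)
    obtain ⟨x, hxk, hx⟩ := hfacet k k.2
    have hx' : ∀ i, f i x ≤ 0 := hJ x fun i hi => by
      by_cases hik : i = k
      · exact (hik ▸ hxk).le
      · exact (hx i hi hik).le
    have h := hproj j j.2 x hx' k
    have hjx := hx j j.2 hkj'
    simp only [map_sub, map_smul, smul_eq_mul, hxk, zero_sub] at h
    nlinarith
  · intro c hc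
    have hext := hpos (fun i => if h : i ∈ J then c ⟨i, h⟩ else 0) ?_
    · rw [← hext, ← Finset.sum_subset (Finset.subset_univ J) (by simp +contextual),
        ← Finset.sum_coe_sort J]
      simp
    · refine le_of_eq_of_le ?_ hc
      rw [← Finset.sum_subset (Finset.subset_univ J) (by simp +contextual),
        ← Finset.sum_coe_sort J]
      refine Finset.sum_congr rfl fun i _ => ?_
      rw [← Finset.sum_subset (Finset.subset_univ J) (by simp +contextual),
        ← Finset.sum_coe_sort J]
      simp

/-- The common kernel of linearly independent functionals has the expected dimension. -/
theorem finrank_iInf_ker_add_card {ι V : Type*} [Fintype ι] [AddCommGroup V] [Module ℝ V]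
    [FiniteDimensional ℝ V] {f : ι → Module.Dual ℝ V} (hf : LinearIndependent ℝ f) :
    Module.finrank ℝ (⨅ i, LinearMap.ker (f i) : Submodule ℝ V) + Fintype.card ι =
      Module.finrank ℝ V := by
  have hker : (⨅ i, LinearMap.ker (f i) : Submodule ℝ V)
      = (Submodule.span ℝ (Set.range f)).dualCoannihilator := by
    refine SetLike.coe_injective ?_
    rw [Submodule.coe_dualCoannihilator_span]
    ext v
    simp
  rw [hker, ← finrank_span_eq_card hf, add_comm]
  exact Subspace.finrank_add_finrank_dualCoannihilator_eq _

/-- A set whose differences lie in a subspace and realise every direction of it spans it. -/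
theorem vectorSpan_eq_of_sub_mem {V : Type*} [AddCommGroup V] [Module ℝ V] {G : Set V}
    {D : Submodule ℝ V} (hle : ∀ x ∈ G, ∀ y ∈ G, x - y ∈ D)
    (hge : ∀ v ∈ D, ∃ x ∈ G, ∃ y ∈ G, ∃ t : ℝ, t ≠ 0 ∧ x - y = t • v) :
    vectorSpan ℝ G = D := by
  refine le_antisymm (Submodule.span_le.2 ?_) fun v hv => ?_
  · rintro _ ⟨x, hx, y, hy, rfl⟩
    exact hle x hx y hy
  · obtain ⟨x, hx, y, hy, t, ht, hxy⟩ := hge v hv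
    refine (Submodule.smul_mem_iff _ ht).1 ?_
    rw [← hxy]
    exact vsub_mem_vectorSpan ℝ hx hy

/-- The part of a set where an upper bound of a continuous functional is attained is exposed. -/
theorem isExposed_setOf_eq {V : Type*} [NormedAddCommGroup V] [NormedSpace ℝ V] {A : Set V}
    (l : StrongDual ℝ V) {c : ℝ} (hle : ∀ y ∈ A, l y ≤ c) : IsExposed ℝ A {y ∈ A | l y = c} := by
  rintro ⟨x, hxA, hx⟩
  refine ⟨l, Set.ext fun y => and_congr_right fun hy => ⟨fun h z hz => h ▸ hle z hz, fun h => ?_⟩⟩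
  exact le_antisymm (hle y hy) (hx ▸ h x hxA)

/-- The spatial part of a vector of Minkowski space. -/
def spatial {n : ℕ} (x : Fin (n + 1) → ℝ) : EuclideanSpace ℝ (Fin n) :=
  WithLp.toLp 2 fun i => x i.succ

theorem mink_eq_inner_spatial {n : ℕ} (x y : Fin (n + 1) → ℝ) :
    mink x y = inner ℝ (spatial x) (spatial y) - x 0 * y 0 := by
  simp only [mink, spatial, PiLp.inner_apply, RCLike.inner_apply, conj_trivial]
  rw [neg_add_eq_sub]
  congr 1
  exact Finset.sum_congr rfl fun i _ => mul_comm _ _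

theorem spatial_eq_smul_kleinMap {n : ℕ} {x : Fin (n + 1) → ℝ} (hx : x 0 ≠ 0) :
    spatial x = x 0 • kleinMap x := by
  ext i
  simp [spatial, kleinMap, mul_div_cancel₀ _ hx]

namespace HypPolyhedron

variable {n : ℕ} (P : HypPolyhedron n)

/-- The linear part of the `i`-th bounding half-space in the Klein model, which is
`{y | P.wall i y ≤ P.e i 0}`. -/
def wall (i : Fin P.m) : Module.Dual ℝ (EuclideanSpace ℝ (Fin n)) :=
  innerₗ _ (spatial (P.e i))

theorem wall_apply (i : Fin P.m) (y : EuclideanSpace ℝ (Fin n)) :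
    P.wall i y = inner ℝ (spatial (P.e i)) y := rfl

theorem continuous_wall (i : Fin P.m) : Continuous (P.wall i) :=
  (P.wall i).continuous_of_finiteDimensional

theorem wall_spatial_pos (i : Fin P.m) : 0 < P.wall i (spatial (P.e i)) := by
  have h := P.unit i
  rw [mink_eq_inner_spatial] at h
  rw [wall_apply]
  nlinarith [mul_self_nonneg (P.e i 0)]

theorem image_carrier :
    kleinMap '' P.carrier = {y | ‖y‖ < 1 ∧ ∀ i, P.wall i y ≤ P.e i 0} := by
  ext y
  constructor
  · rintro ⟨x, ⟨⟨hxx, hx0⟩, hx⟩, rfl⟩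
    have hs := spatial_eq_smul_kleinMap hx0.ne'
    constructor
    · rw [mink_eq_inner_spatial, hs, real_inner_smul_left, real_inner_smul_right,
        real_inner_self_eq_norm_sq] at hxx
      by_contra! hle
      have : 1 ≤ ‖kleinMap x‖ ^ 2 := by nlinarith
      nlinarith [mul_pos hx0 hx0]
    · intro i
      have h := hx i
      rw [mink_eq_inner_spatial, hs, real_inner_smul_right] at h
      rw [wall_apply]
      by_contra! hlt
      nlinarith
  · rintro ⟨hy, hw⟩
    have hpos : 0 < 1 - ‖y‖ ^ 2 := by nlinarith [norm_nonneg y]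
    set c := (Real.sqrt (1 - ‖y‖ ^ 2))⁻¹ with hc
    have hc0 : 0 < c := inv_pos.2 (Real.sqrt_pos.2 hpos)
    have hcc : c ^ 2 * (1 - ‖y‖ ^ 2) = 1 := by
      rw [hc, inv_pow, Real.sq_sqrt hpos.le, inv_mul_cancel₀ hpos.ne']
    have hspat : spatial (Fin.cons c fun i => c * y i : Fin (n + 1) → ℝ) = c • y := by
      ext i
      simp [spatial]
    refine ⟨Fin.cons c fun i => c * y i, ⟨⟨?_, by simpa using hc0⟩, fun i => ?_⟩, ?_⟩
    · rw [mink_eq_inner_spatial, hspat, real_inner_smul_left, real_inner_smul_right,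
        real_inner_self_eq_norm_sq]
      simp only [Fin.cons_zero]
      nlinarith
    · rw [mink_eq_inner_spatial, hspat, real_inner_smul_right, Fin.cons_zero]
      have := hw i
      rw [wall_apply] at this
      nlinarith
    · ext i
      simp [kleinMap, mul_div_cancel_left₀ _ hc0.ne']

theorem mem_image_carrier {y : EuclideanSpace ℝ (Fin n)} :
    y ∈ kleinMap '' P.carrier ↔ ‖y‖ < 1 ∧ ∀ i, P.wall i y ≤ P.e i 0 := by
  rw [image_carrier]; rfl

theorem wall_le_of_mem_cl {y : EuclideanSpace ℝ (Fin n)} (hy : y ∈ P.cl) (i : Fin P.m) :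
    P.wall i y ≤ P.e i 0 :=
  closure_minimal (fun _ hz => (P.mem_image_carrier.1 hz).2 i)
    (isClosed_le (P.continuous_wall i) continuous_const) hy

theorem norm_le_one_of_mem_cl {y : EuclideanSpace ℝ (Fin n)} (hy : y ∈ P.cl) : ‖y‖ ≤ 1 :=
  closure_minimal (fun _ hz => (P.mem_image_carrier.1 hz).1.le)
    (isClosed_le continuous_norm continuous_const) hy

theorem convex_cl : Convex ℝ P.cl := by
  refine Convex.closure ?_
  have : kleinMap '' P.carrier
      = Metric.ball 0 1 ∩ ⋂ i, {y | P.wall i y ≤ P.e i 0} := by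
    rw [image_carrier]
    ext y
    simp
  rw [this]
  exact (convex_ball _ _).inter (convex_iInter fun i => convex_halfSpace_le (P.wall i).isLinear _)

/-- A polyhedron contains a small initial segment in each direction of its tangent cone. -/
theorem eventually_mem_cl {p u : EuclideanSpace ℝ (Fin n)} (hp : p ∈ kleinMap '' P.carrier)
    (hu : ∀ i, P.wall i p = P.e i 0 → P.wall i u ≤ 0) :
    ∀ᶠ t : ℝ in nhdsWithin 0 (Set.Ioi 0), p + t • u ∈ P.cl := by
  rw [mem_image_carrier] at hp
  have hlim : Filter.Tendsto (fun t : ℝ => p + t • u) (nhdsWithin 0 (Set.Ioi 0)) (nhds p) := by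
    have : Filter.Tendsto (fun t : ℝ => p + t • u) (nhds 0) (nhds (p + (0 : ℝ) • u)) :=
      Continuous.tendsto (by fun_prop) 0
    rw [zero_smul, add_zero] at this
    exact this.mono_left nhdsWithin_le_nhds
  have hwall : ∀ᶠ t : ℝ in nhdsWithin 0 (Set.Ioi 0), ∀ i, P.wall i (p + t • u) ≤ P.e i 0 := by
    rw [Filter.eventually_all]
    intro i
    rcases (hp.2 i).eq_or_lt with h | h
    · filter_upwards [self_mem_nhdsWithin] with t ht
      simp only [map_add, map_smul, smul_eq_mul, h]
      nlinarith [hu i h, Set.mem_Ioi.1 ht]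
    · filter_upwards [(((P.continuous_wall i).tendsto p).comp hlim).eventually_lt_const h]
        with t ht using ht.le
  filter_upwards [hwall, hlim.norm.eventually_lt_const hp.1] with t h₁ h₂
  exact subset_closure (P.mem_image_carrier.2 ⟨h₂, h₁⟩)

/-- An interior point lies strictly inside every bounding half-space. -/
theorem exists_interior_point :
    ∃ q, (∀ i, P.wall i q < P.e i 0) ∧
      ∀ v, ∀ᶠ t : ℝ in nhdsWithin 0 (Set.Ioi 0), q + t • v ∈ kleinMap '' P.carrier := by
  obtain ⟨q, hq⟩ := P.nonempty_int
  change q ∈ interior (kleinMap '' P.carrier) at hq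
  have hev : ∀ v, ∀ᶠ t : ℝ in nhdsWithin 0 (Set.Ioi 0), q + t • v ∈ kleinMap '' P.carrier := by
    intro v
    have : Filter.Tendsto (fun t : ℝ => q + t • v) (nhds 0) (nhds (q + (0 : ℝ) • v)) :=
      Continuous.tendsto (by fun_prop) 0
    rw [zero_smul, add_zero] at this
    exact (this.mono_left nhdsWithin_le_nhds).eventually (mem_interior_iff_mem_nhds.1 hq)
  refine ⟨q, fun i => ?_, hev⟩
  obtain ⟨t, ht, hpos⟩ := ((hev (spatial (P.e i))).and self_mem_nhdsWithin).exists
  have h := (P.mem_image_carrier.1 ht).2 i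
  simp only [map_add, map_smul, smul_eq_mul] at h
  nlinarith [mul_pos (Set.mem_Ioi.1 hpos) (P.wall_spatial_pos i)]

theorem sdim_cl : sdim P.cl = n := by
  obtain ⟨q, -, hq⟩ := P.exists_interior_point
  have : vectorSpan ℝ P.cl = ⊤ := by
    refine vectorSpan_eq_of_sub_mem (fun _ _ _ _ => Submodule.mem_top) fun v _ => ?_
    obtain ⟨t, ht, hpos⟩ := ((hq v).and self_mem_nhdsWithin).exists
    obtain ⟨s, hs⟩ := (hq 0).exists
    rw [smul_zero, add_zero] at hs
    exact ⟨_, subset_closure ht, q, subset_closure hs, t, (Set.mem_Ioi.1 hpos).ne', by simp⟩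
  rw [sdim, this, finrank_top, finrank_euclideanSpace_fin]

/-- The face cut out by the walls `g k` has codimension `card κ`, provided that the walls are
independent and that the face has a relatively interior direction `z` at `p`. -/
theorem face_mem_faces {p : EuclideanSpace ℝ (Fin n)} (hp : p ∈ kleinMap '' P.carrier)
    {κ : Type*} [Fintype κ] (g : κ → Fin P.m) (hg : ∀ k, P.wall (g k) p = P.e (g k) 0)
    (hind : LinearIndependent ℝ fun k => P.wall (g k))
    {z : EuclideanSpace ℝ (Fin n)} (hz : ∀ k, P.wall (g k) z = 0)
    (hzC : ∀ i, P.wall i p = P.e i 0 → P.wall i z ≤ 0)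
    (hrel : ∀ v, (∀ k, P.wall (g k) v = 0) → ∃ ε : ℝ, 0 < ε ∧
      ∀ i, P.wall i p = P.e i 0 → P.wall i (z + ε • v) ≤ 0) :
    {y ∈ P.cl | ∀ k, P.wall (g k) y = P.e (g k) 0} ∈ P.faces (n - Fintype.card κ) := by
  refine ⟨?_, ⟨p, subset_closure hp, hg⟩, ?_⟩
  · have hset : {y ∈ P.cl | ∀ k, P.wall (g k) y = P.e (g k) 0} =
        {y ∈ P.cl | (∑ k, P.wall (g k)).toContinuousLinearMap y = ∑ k, P.e (g k) 0} := by
      ext y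
      refine and_congr_right fun hy => ?_
      have := Finset.sum_eq_sum_iff_of_le (s := Finset.univ) fun k _ =>
        P.wall_le_of_mem_cl hy (g k)
      simpa using this.symm
    rw [hset]
    refine isExposed_setOf_eq _ fun y hy => ?_
    simpa using Finset.sum_le_sum fun k (_ : k ∈ Finset.univ) => P.wall_le_of_mem_cl hy (g k)
  · have hspan : vectorSpan ℝ {y ∈ P.cl | ∀ k, P.wall (g k) y = P.e (g k) 0} =
        ⨅ k, LinearMap.ker (P.wall (g k)) := by
      refine vectorSpan_eq_of_sub_mem (fun x hx y hy => ?_) fun v hv => ?_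
      · simp [hx.2, hy.2]
      · replace hv : ∀ k, P.wall (g k) v = 0 := by simpa using hv
        obtain ⟨ε, hε, hεv⟩ := hrel v hv
        obtain ⟨t, ⟨ht₁, ht₂⟩, hpos⟩ := (((P.eventually_mem_cl hp hεv).and
          (P.eventually_mem_cl hp hzC)).and self_mem_nhdsWithin).exists
        refine ⟨_, ⟨ht₁, fun k => by simp [hg, hz, hv]⟩, _, ⟨ht₂, fun k => by simp [hg, hz]⟩,
          t * ε, mul_ne_zero (Set.mem_Ioi.1 hpos).ne' hε.ne', ?_⟩
        rw [add_sub_add_left_eq_sub, ← smul_sub, add_sub_cancel_left, smul_smul]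
    have hdim := finrank_iInf_ker_add_card hind
    rw [finrank_euclideanSpace_fin] at hdim
    rw [sdim, hspan]
    omega

/-- The Minkowski form is positive definite on the span of the normals of the walls through a
point of hyperbolic space. -/
theorem sum_smul_wall_eq_zero {p : EuclideanSpace ℝ (Fin n)} (hp : ‖p‖ < 1) {κ : Type*}
    [Fintype κ] (g : κ → Fin P.m) (hg : ∀ k, P.wall (g k) p = P.e (g k) 0) (c : κ → ℝ)
    (hc : ∑ i, ∑ j, c i * c j * mink (P.e (g i)) (P.e (g j)) ≤ 0) :
    ∑ i, c i • P.wall (g i) = 0 := by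
  set a := ∑ i, c i • spatial (P.e (g i)) with ha
  have hap : inner ℝ a p = ∑ i, c i * P.e (g i) 0 := by
    simp only [ha, sum_inner, real_inner_smul_left, ← hg, wall_apply]
  have haa : inner ℝ a a
      = ∑ i, ∑ j, c i * c j * inner ℝ (spatial (P.e (g i))) (spatial (P.e (g j))) := by
    simp only [ha, sum_inner, real_inner_smul_left]
    simp only [inner_sum, real_inner_smul_right, Finset.mul_sum, mul_assoc]
  have hsum : ∑ i, ∑ j, c i * c j * mink (P.e (g i)) (P.e (g j))
      = inner ℝ a a - inner ℝ a p * inner ℝ a p := by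
    rw [hap, haa, Finset.sum_mul_sum, ← Finset.sum_sub_distrib]
    refine Finset.sum_congr rfl fun i _ => ?_
    rw [← Finset.sum_sub_distrib]
    refine Finset.sum_congr rfl fun j _ => ?_
    rw [mink_eq_inner_spatial]
    ring
  rw [hsum, real_inner_self_eq_norm_sq] at hc
  have ha0 : a = 0 := by
    by_contra hne
    have hpos := norm_pos_iff.2 hne
    have hcs := abs_le.1 (abs_real_inner_le_norm a p)
    have hlt : ‖a‖ * ‖p‖ < ‖a‖ := by nlinarith
    nlinarith [norm_nonneg p]
  ext v
  simp only [LinearMap.sum_apply, LinearMap.smul_apply, wall_apply, smul_eq_mul,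
    ← real_inner_smul_left, ← sum_inner]
  simp [← ha, ha0]

/-- The tangent cone of a right-angled polyhedron at a point of hyperbolic space is cut out by
linearly independent walls, each of which supports a facet. -/
theorem exists_independent_walls (hra : P.IsRightAngled)
    {p : EuclideanSpace ℝ (Fin n)} (hp : p ∈ kleinMap '' P.carrier) :
    ∃ J : Finset (Fin P.m), (∀ j ∈ J, P.wall j p = P.e j 0) ∧
      (∀ v, (∀ j ∈ J, P.wall j v ≤ 0) → ∀ i, P.wall i p = P.e i 0 → P.wall i v ≤ 0) ∧
      (∀ k ∈ J, ∃ z, P.wall k z = 0 ∧ ∀ j ∈ J, j ≠ k → P.wall j z < 0) ∧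
      LinearIndependent ℝ fun j : J => P.wall j := by
  classical
  let ι := {i : Fin P.m // P.wall i p = P.e i 0}
  let f : ι → Module.Dual ℝ (EuclideanSpace ℝ (Fin n)) := fun i => P.wall i
  let w : ι → EuclideanSpace ℝ (Fin n) := fun i => spatial (P.e i) - P.e i 0 • p
  have hgram : ∀ i j : ι, f i (w j) = mink (P.e i) (P.e j) := by
    intro i j
    simp only [f, w, map_sub, map_smul, i.2, smul_eq_mul, mink_eq_inner_spatial, wall_apply]
    ring
  obtain ⟨q, hq, -⟩ := P.exists_interior_point
  obtain ⟨J, hJ, hfacet, hind⟩ := exists_linearIndependent_of_rightAngled_cone f w (q - p)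
    (fun i => by
      have := hq i
      simp only [f, map_sub, i.2]
      linarith)
    (fun c hc => P.sum_smul_wall_eq_zero (P.mem_image_carrier.1 hp).1 (fun i : ι => (i : Fin P.m))
      (fun i => i.2) c (by simpa only [hgram] using hc))
    (fun i => by rw [hgram, P.unit])
    (fun i j => by
      rw [hgram, hgram, mink_eq_inner_spatial, mink_eq_inner_spatial, real_inner_comm, mul_comm])
    (by
      rintro j k hjk ⟨y, hyj, hyk⟩ ⟨z, hzj, hzk, hz, hrel⟩
      rw [hgram]
      have hface := P.face_mem_faces hp ![(j : Fin P.m), k]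
        (by rw [Fin.forall_fin_two]; exact ⟨j.2, k.2⟩) (z := z)
        (by
          have hpair : LinearIndependent ℝ ![P.wall j, P.wall k] := by
            rw [LinearIndependent.pair_iff]
            intro a b hab
            have hy := LinearMap.congr_fun hab y
            have hyj : P.wall j y = 0 := hyj
            have hyk : P.wall k y < 0 := hyk
            have hb : b = 0 := by simpa [hyj, hyk.ne] using hy
            have hs := LinearMap.congr_fun hab (spatial (P.e j))
            exact ⟨by simpa [hb, (P.wall_spatial_pos j).ne'] using hs, hb⟩
          convert hpair using 1
          ext x
          fin_cases x <;> rfl)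
        (by rw [Fin.forall_fin_two]; exact ⟨hzj, hzk⟩) (fun i hi => hz ⟨i, hi⟩)
        (fun v hv => by
          rw [Fin.forall_fin_two] at hv
          obtain ⟨ε, hε, h⟩ := hrel v hv.1 hv.2
          exact ⟨ε, hε, fun i hi => h ⟨i, hi⟩⟩)
      rw [Fintype.card_fin] at hface
      have hin : ∀ l : Fin 2, P.faceInHyperplane (P.e (![(j : Fin P.m), k] l))
          {y ∈ P.cl | ∀ l, P.wall (![(j : Fin P.m), k] l) y = P.e (![(j : Fin P.m), k] l) 0} := by
        intro l x hx hxF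
        have h := hxF.2 l
        rw [wall_apply] at h
        rw [mink_eq_inner_spatial, spatial_eq_smul_kleinMap hx.1.2.ne', real_inner_smul_right, h]
        ring
      exact hra j k (fun h => hjk (Subtype.ext h)) ⟨_, hface, hin 0, hin 1⟩)
  refine ⟨J.map (Function.Embedding.subtype _), ?_, ?_, ?_, ?_⟩
  · intro j hj
    obtain ⟨i, -, rfl⟩ := Finset.mem_map.1 hj
    exact i.2
  · intro v hv i hi
    exact hJ v (fun j hj => hv j (Finset.mem_map_of_mem _ hj)) ⟨i, hi⟩
  · intro k hk
    obtain ⟨k, hkJ, rfl⟩ := Finset.mem_map.1 hk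
    obtain ⟨z, hzk, hz⟩ := hfacet k hkJ
    refine ⟨z, hzk, fun j hj hjk => ?_⟩
    obtain ⟨j, hjJ, rfl⟩ := Finset.mem_map.1 hj
    exact hz j hjJ fun h => hjk (h ▸ rfl)
  · have hmem : ∀ j : J.map (Function.Embedding.subtype _), ∃ i : J, (i : ι) = (j : Fin P.m) :=
      fun j => by
        obtain ⟨i, hi, hij⟩ := Finset.mem_map.1 j.2
        exact ⟨⟨i, hi⟩, hij⟩
    choose φ hφ using hmem
    have hinj : Function.Injective φ := fun a b hab => Subtype.ext (by rw [← hφ a, ← hφ b, hab])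
    convert hind.comp φ hinj using 1
    ext1 j
    exact congrArg P.wall (hφ j).symm

/-- An edge contains a point of hyperbolic space such that the direction of the edge is the common
kernel of the walls through that point. -/
theorem exists_mem_of_mem_faces_one {L : Set (EuclideanSpace ℝ (Fin n))}
    (hL : L ∈ P.faces 1) :
    ∃ p ∈ L, p ∈ kleinMap '' P.carrier ∧
      vectorSpan ℝ L = ⨅ i : {i // P.wall i p = P.e i 0}, LinearMap.ker (P.wall i) := by
  obtain ⟨hexp, hne, hdim⟩ := hL
  have hnt : L.Nontrivial := by
    by_contra hs
    rw [Set.not_nontrivial_iff] at hs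
    rw [sdim, vectorSpan_of_subsingleton ℝ hs, finrank_bot] at hdim
    exact zero_ne_one hdim
  obtain ⟨a, ha, b, hb, hab⟩ := hnt
  have haP := hexp.subset ha
  have hbP := hexp.subset hb
  set p := (1 / 2 : ℝ) • a + (1 / 2 : ℝ) • b with hpdef
  have hpL : p ∈ L := hexp.convex P.convex_cl ha hb (by norm_num) (by norm_num) (by norm_num)
  have hp : p ∈ kleinMap '' P.carrier := P.mem_image_carrier.2
    ⟨norm_combo_lt_of_ne (P.norm_le_one_of_mem_cl haP) (P.norm_le_one_of_mem_cl hbP) hab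
      (by norm_num) (by norm_num) (by norm_num), P.wall_le_of_mem_cl (hexp.subset hpL)⟩
  refine ⟨p, hpL, hp, ?_⟩
  have hab_span : b - a ∈ vectorSpan ℝ L := vsub_mem_vectorSpan ℝ hb ha
  have hline : vectorSpan ℝ L = ℝ ∙ (b - a) := by
    refine (Submodule.eq_of_le_of_finrank_eq
      ((Submodule.span_singleton_le_iff_mem _ _).2 hab_span) ?_).symm
    rw [finrank_span_singleton (sub_ne_zero.2 hab.symm)]
    exact hdim.symm
  refine le_antisymm ?_ fun v hv => ?_
  · rw [hline, Submodule.span_singleton_le_iff_mem, Submodule.mem_iInf]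
    rintro ⟨i, hi⟩
    have h₁ := P.wall_le_of_mem_cl haP i
    have h₂ := P.wall_le_of_mem_cl hbP i
    simp only [hpdef, map_add, map_smul, smul_eq_mul] at hi
    rw [LinearMap.mem_ker, map_sub]
    linarith
  · replace hv : ∀ i, P.wall i p = P.e i 0 → P.wall i v = 0 := by simpa using hv
    obtain ⟨l, hl⟩ := hexp ⟨p, hpL⟩
    obtain ⟨t, ⟨ht₁, ht₂⟩, hpos⟩ := (((P.eventually_mem_cl hp fun i hi => (hv i hi).le).and
      (P.eventually_mem_cl (u := -v) hp fun i hi => by simp [hv i hi])).and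
        self_mem_nhdsWithin).exists
    have hmax : ∀ y ∈ P.cl, l y ≤ l p := (hl ▸ hpL).2
    have hlv : l v = 0 := by
      have h₁ := hmax _ ht₁
      have h₂ := hmax _ ht₂
      simp only [map_add, map_smul, smul_eq_mul, map_neg] at h₁ h₂
      exact le_antisymm (by nlinarith) (by nlinarith)
    have hmem : p + t • v ∈ L := by
      rw [hl]
      exact ⟨ht₁, fun y hy => by simpa [hlv] using hmax y hy⟩
    have := vsub_mem_vectorSpan ℝ hmem hpL
    rw [vsub_eq_sub, add_sub_cancel_left] at this
    exact (Submodule.smul_mem_iff _ hpos.ne').1 this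

/-- A facet through `p` lies in one of the walls cutting out the tangent cone at `p`. -/
theorem exists_wall_of_mem_faces {p : EuclideanSpace ℝ (Fin n)} (hn : n ≠ 0)
    (hp : p ∈ kleinMap '' P.carrier) {J : Finset (Fin P.m)}
    (hJp : ∀ j ∈ J, P.wall j p = P.e j 0)
    (hJ : ∀ v, (∀ j ∈ J, P.wall j v ≤ 0) → ∀ i, P.wall i p = P.e i 0 → P.wall i v ≤ 0)
    {F : Set (EuclideanSpace ℝ (Fin n))} (hF : F ∈ P.faces (n - 1)) (hpF : p ∈ F) :
    ∃ j ∈ J, ∀ x ∈ F, P.wall j x = P.e j 0 := by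
  obtain ⟨hexp, hne, hdim⟩ := hF
  obtain ⟨l, hl⟩ := hexp hne
  have hmax : ∀ y ∈ P.cl, l y ≤ l p := (hl ▸ hpF).2
  by_contra! hcon
  choose! x hxF hx using hcon
  have hxP : ∀ j ∈ J, x j ∈ P.cl := fun j hj => hexp.subset (hxF j hj)
  let u := ∑ j ∈ J, (x j - p)
  have hlu : l u = 0 := by
    rw [map_sum]
    refine Finset.sum_eq_zero fun j hj => ?_
    have h : x j ∈ {x ∈ P.cl | ∀ y ∈ P.cl, l y ≤ l x} := hl ▸ hxF j hj
    rw [map_sub, sub_eq_zero]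
    exact le_antisymm (hmax _ (hxP j hj)) (h.2 p (hexp.subset hpF))
  have hu : ∀ k ∈ J, P.wall k u < 0 := by
    intro k hk
    rw [map_sum]
    refine Finset.sum_neg' (fun j hj => ?_) ⟨k, hk, ?_⟩
    · rw [map_sub, hJp k hk, sub_nonpos]
      exact P.wall_le_of_mem_cl (hxP j hj) k
    · rw [map_sub, hJp k hk, sub_neg]
      exact lt_of_le_of_ne (P.wall_le_of_mem_cl (hxP k hk) k) (hx k hk)
  have hle : ∀ v, l v ≤ 0 := by
    intro v
    have hev : ∀ᶠ s : ℝ in nhdsWithin 0 (Set.Ioi 0), ∀ k ∈ J, P.wall k (u + s • v) ≤ 0 := by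
      rw [Filter.eventually_all_finset]
      intro k hk
      have hlim : Filter.Tendsto (fun s : ℝ => P.wall k u + s * P.wall k v) (nhds 0)
          (nhds (P.wall k u + 0 * P.wall k v)) := Continuous.tendsto (by fun_prop) 0
      rw [zero_mul, add_zero] at hlim
      filter_upwards [nhdsWithin_le_nhds (hlim.eventually_lt_const (hu k hk))] with s hs
      simpa using hs.le
    obtain ⟨s, hs, hs0⟩ := (hev.and self_mem_nhdsWithin).exists
    obtain ⟨t, ht, ht0⟩ := ((P.eventually_mem_cl hp (hJ _ hs)).and self_mem_nhdsWithin).exists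
    have h := hmax _ ht
    simp only [map_add, map_smul, smul_eq_mul, hlu, zero_add] at h
    have hts := mul_pos ht0 hs0
    by_contra! hlt
    nlinarith [mul_pos hts hlt]
  have hl0 : ∀ v, l v = 0 := fun v => le_antisymm (hle v) (by simpa using hle (-v))
  have hFP : F = P.cl := by
    rw [hl]
    ext y
    simp [hl0]
  rw [hFP, sdim_cl] at hdim
  omega

/-- Nested faces of the same dimension coincide. -/
theorem eq_of_subset_of_mem_faces {k : ℕ} {F G : Set (EuclideanSpace ℝ (Fin n))}
    (hF : F ∈ P.faces k) (hG : G ∈ P.faces k) (hFG : F ⊆ G) : F = G := by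
  obtain ⟨hexp, ⟨p, hpF⟩, hdim⟩ := hF
  obtain ⟨l, hl⟩ := hexp ⟨p, hpF⟩
  refine hFG.antisymm fun x hx => ?_
  have hspan : vectorSpan ℝ F = vectorSpan ℝ G :=
    Submodule.eq_of_le_of_finrank_eq (vectorSpan_mono ℝ hFG) (hdim.trans hG.2.2.symm)
  have hconst : vectorSpan ℝ F ≤ LinearMap.ker (l : EuclideanSpace ℝ (Fin n) →ₗ[ℝ] ℝ) := by
    refine Submodule.span_le.2 ?_
    rintro _ ⟨y, hy, z, hz, rfl⟩
    rw [hl] at hy hz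
    change l (y - z) = 0
    rw [map_sub, sub_eq_zero]
    exact le_antisymm (hz.2 y hy.1) (hy.2 z hz.1)
  have hxp : l (x - p) = 0 := hconst (hspan ▸ vsub_mem_vectorSpan ℝ hx (hFG hpF))
  rw [map_sub, sub_eq_zero] at hxp
  rw [hl] at hpF ⊢
  exact ⟨hG.1.subset hx, fun y hy => hxp ▸ hpF.2 y hy⟩

end HypPolyhedron

/-- Every finite-volume right-angled convex hyperbolic `n`-polyhedron (`n ≥ 2`) is simple
at edges: each `1`-face is contained in exactly `n - 1` facets. -/
theorem right_angled_simple_at_edges (n : ℕ) (hn : 2 ≤ n) (P : HypPolyhedron n)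
    (hfv : P.FiniteVolume) (hra : P.IsRightAngled) :
    ∀ L ∈ P.faces 1, {F ∈ P.faces (n - 1) | L ⊆ F}.ncard = n - 1 := by
  intro L hL
  obtain ⟨p, hpL, hp, hspan⟩ := P.exists_mem_of_mem_faces_one hL
  obtain ⟨J, hJp, hJ, hfacet, hind⟩ := P.exists_independent_walls hra hp
  have hcard : J.card = n - 1 := by
    have hker : vectorSpan ℝ L = ⨅ j : J, LinearMap.ker (P.wall j) := by
      rw [hspan]
      ext v
      simp only [Submodule.mem_iInf, LinearMap.mem_ker, Subtype.forall]
      refine ⟨fun h j hj => h j (hJp j hj), fun h i hi => le_antisymm ?_ ?_⟩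
      · exact hJ v (fun j hj => (h j hj).le) i hi
      · simpa using hJ (-v) (fun j hj => by simp [h j hj]) i hi
    have hdim := finrank_iInf_ker_add_card hind
    have hL1 : Module.finrank ℝ (vectorSpan ℝ L) = 1 := hL.2.2
    rw [← hker, hL1, finrank_euclideanSpace_fin, Fintype.card_coe] at hdim
    omega
  let facet : J → Set (EuclideanSpace ℝ (Fin n)) := fun j =>
    {y ∈ P.cl | ∀ _ : Unit, P.wall j y = P.e j 0}
  have hfacet_mem : ∀ j, facet j ∈ P.faces (n - 1) := by
    intro j
    obtain ⟨z, hzj, hz⟩ := hfacet j j.2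
    have hcone : ∀ v, P.wall j v = 0 → (∀ k ∈ J, k ≠ j → P.wall k v ≤ 0) →
        ∀ i, P.wall i p = P.e i 0 → P.wall i v ≤ 0 := by
      intro v hvj hv
      refine hJ v fun k hk => ?_
      by_cases hkj : k = j
      · exact (hkj ▸ hvj).le
      · exact hv k hk hkj
    refine P.face_mem_faces hp (fun _ : Unit => (j : Fin P.m)) (fun _ => hJp j j.2)
      (hind.comp (fun _ : Unit => j) fun _ _ _ => rfl) (fun _ => hzj)
      (hcone z hzj fun k hk hkj => (hz k hk hkj).le) fun v hv => ?_
    replace hv := hv ()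
    have hev : ∀ᶠ s : ℝ in nhdsWithin 0 (Set.Ioi 0),
        ∀ k ∈ J, k ≠ j → P.wall k (z + s • v) ≤ 0 := by
      rw [Filter.eventually_all_finset]
      intro k hk
      by_cases hkj : k = j
      · simp [hkj]
      · have hlim : Filter.Tendsto (fun s : ℝ => P.wall k z + s * P.wall k v) (nhds 0)
            (nhds (P.wall k z + 0 * P.wall k v)) := Continuous.tendsto (by fun_prop) 0
        rw [zero_mul, add_zero] at hlim
        filter_upwards [nhdsWithin_le_nhds (hlim.eventually_lt_const (hz k hk hkj))] with s hs _
        simpa using hs.le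
    obtain ⟨ε, hε, hpos⟩ := (hev.and self_mem_nhdsWithin).exists
    exact ⟨ε, hpos, hcone _ (by simp [hzj, hv]) hε⟩
  have hinj : Function.Injective facet := by
    intro j k hjk
    by_contra hne
    obtain ⟨z, hzj, hz⟩ := hfacet j j.2
    have hzk := hz k k.2 fun h => hne (Subtype.ext h.symm)
    obtain ⟨t, ht, hpos⟩ := ((P.eventually_mem_cl hp (hJ z fun i hi => by
      by_cases hij : i = j
      · exact (hij ▸ hzj).le
      · exact (hz i hi hij).le)).and self_mem_nhdsWithin).exists
    have hmem : p + t • z ∈ facet j := ⟨ht, fun _ => by simp [hzj, hJp j j.2]⟩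
    rw [hjk] at hmem
    have h := hmem.2 ()
    simp only [map_add, map_smul, smul_eq_mul, hJp k k.2] at h
    nlinarith [mul_pos (Set.mem_Ioi.1 hpos) (neg_pos.2 hzk)]
  have hset : {F ∈ P.faces (n - 1) | L ⊆ F} = Set.range facet := by
    ext F
    constructor
    · rintro ⟨hF, hLF⟩
      obtain ⟨j, hj, hjF⟩ := P.exists_wall_of_mem_faces (by omega) hp hJp hJ hF (hLF hpL)
      exact ⟨⟨j, hj⟩, (P.eq_of_subset_of_mem_faces hF (hfacet_mem ⟨j, hj⟩)
        fun x hx => ⟨hF.1.subset hx, fun _ => hjF x hx⟩).symm⟩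
    · rintro ⟨j, rfl⟩
      refine ⟨hfacet_mem j, fun x hx => ⟨hL.1.subset hx, fun _ => ?_⟩⟩
      have hxp : x - p ∈ vectorSpan ℝ L := vsub_mem_vectorSpan ℝ hx hpL
      rw [hspan, Submodule.mem_iInf] at hxp
      have h := hxp ⟨j, hJp j j.2⟩
      rw [LinearMap.mem_ker, map_sub, hJp j j.2, sub_eq_zero] at h
      exact h
  rw [hset, ← Set.image_univ, Set.ncard_image_of_injective _ hinj, Set.ncard_univ,
    Nat.card_eq_fintype_card, Fintype.card_coe, hcard]
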